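/- arXiv:1406.4003 — 6 statements merged into one kernel-verified Lean document; each statement's English description precedes it below -/
import Mathlib

section
/- Let ρ ∈ 𝓤^inv and let f = g + φ ∈ WPAA(ρ), where g ∈ SAA and φ ∈ SPAA₀(ρ). Then the closure (in L²(P,H)) of the range {f(t) : t ∈ ℝ} contains the range {g(t) : t ∈ ℝ}; equivalently, for every t₀ ∈ ℝ and ε > 0 there exists t ∈ ℝ with (E‖g(t₀) − f(t)‖²)^{1/2} < ε. -/
open MeasureTheory Filter Set Topology

noncomputable section

section Defs

variable {E : Type*} [NormedAddCommGroup E]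

/-- Stochastic continuity: `E‖x(t) − x(s)‖² → 0` as `t → s` (norms taken in `L²(P,H)`). -/
def StochCont (x : ℝ → E) : Prop :=
  ∀ s : ℝ, Tendsto (fun t => ‖x t - x s‖ ^ 2) (𝓝 s) (𝓝 0)

/-- Stochastic boundedness: `sup_t E‖x(t)‖² < ∞`. -/
def StochBdd (x : ℝ → E) : Prop := ∃ M : ℝ, ∀ t : ℝ, ‖x t‖ ^ 2 ≤ M

/-- Square-mean almost automorphy (SAA). -/
def SAA (x : ℝ → E) : Prop :=
  StochCont x ∧
  ∀ s' : ℕ → ℝ, ∃ φ : ℕ → ℕ, StrictMono φ ∧ ∃ y : ℝ → E,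
    (∀ t : ℝ, Tendsto (fun n => ‖x (t + s' (φ n)) - y t‖ ^ 2) atTop (𝓝 0)) ∧
    (∀ t : ℝ, Tendsto (fun n => ‖y (t - s' (φ n)) - x t‖ ^ 2) atTop (𝓝 0))

/-- `μ(T,ρ) = ∫_{−T}^{T} ρ(t) dt`. -/
def muW (ρ : ℝ → ℝ) (T : ℝ) : ℝ := ∫ t in (-T)..T, ρ t

/-- `ρ ∈ 𝓤_∞`: positive, locally integrable, `μ(T,ρ) → ∞`. -/
def UInfty (ρ : ℝ → ℝ) : Prop :=
  (∀ t, 0 < ρ t) ∧ MeasureTheory.LocallyIntegrable ρ ∧ Tendsto (muW ρ) atTop atTop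

/-- The ergodic-zero class `SPAA₀(ρ)`. Note `(E‖x(t)‖²)^{1/2} = ‖x t‖` in `L²(P,H)`. -/
def SPAA0 (ρ : ℝ → ℝ) (x : ℝ → E) : Prop :=
  StochCont x ∧ StochBdd x ∧
  Tendsto (fun T => (muW ρ T)⁻¹ * ∫ t in (-T)..T, ‖x t‖ * ρ t) atTop (𝓝 0)

/-- `ρ ∈ 𝓤^inv`: `ρ ∈ 𝓤_∞` and `SPAA₀(ρ)` (for `F`-valued processes) is translation invariant. -/
def UInvSp (F : Type*) [NormedAddCommGroup F] (ρ : ℝ → ℝ) : Prop :=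
  UInfty ρ ∧ ∀ x : ℝ → F, SPAA0 ρ x → ∀ τ : ℝ, SPAA0 ρ fun t => x (t + τ)

/-- Square-mean weighted pseudo almost automorphy `WPAA(ρ)`. -/
def WPAA (ρ : ℝ → ℝ) (f : ℝ → E) : Prop :=
  ∃ g h : ℝ → E, SAA g ∧ SPAA0 ρ h ∧ ∀ t, f t = g t + h t

/-- `L²_loc`: square integrability (of the second moment) on compact sets. -/
def L2loc (x : ℝ → E) : Prop :=
  ∀ K : Set ℝ, IsCompact K → IntegrableOn (fun s => ‖x s‖ ^ 2) K

/-- `S²`-almost automorphy (`AS²`). -/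
def AS2 (x : ℝ → E) : Prop :=
  L2loc x ∧
  ∀ s' : ℕ → ℝ, ∃ φ : ℕ → ℕ, StrictMono φ ∧ ∃ y : ℝ → E, L2loc y ∧
    (∀ t : ℝ, Tendsto (fun n => ∫ s in t..(t + 1), ‖x (s + s' (φ n)) - y s‖ ^ 2) atTop (𝓝 0)) ∧
    (∀ t : ℝ, Tendsto (fun n => ∫ s in t..(t + 1), ‖y (s - s' (φ n)) - x s‖ ^ 2) atTop (𝓝 0))

/-- `BS²`: Stepanov boundedness. -/
def BS2 (x : ℝ → E) : Prop :=
  L2loc x ∧ ∃ M : ℝ, ∀ t : ℝ, (∫ s in t..(t + 1), ‖x s‖ ^ 2) ≤ M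

/-- `h^b ∈ SPAA₀^{S²}(ρ)`. -/
def SPAA0S2 (ρ : ℝ → ℝ) (h : ℝ → E) : Prop :=
  Tendsto (fun T => (muW ρ T)⁻¹ *
    ∫ t in (-T)..T, Real.sqrt (∫ s in t..(t + 1), ‖h s‖ ^ 2) * ρ t) atTop (𝓝 0)

/-- `S²`-weighted pseudo almost automorphy `WPAAS²(ρ)`. -/
def WPAAS2 (ρ : ℝ → ℝ) (f : ℝ → E) : Prop :=
  BS2 f ∧ ∃ g h : ℝ → E, AS2 g ∧ SPAA0S2 ρ h ∧ ∀ t, f t = g t + h t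

/-- `ρ₁ ∼ ρ₂`: the quotient `ρ₁/ρ₂` is bounded with positive infimum. -/
def equivW (ρ₁ ρ₂ : ℝ → ℝ) : Prop :=
  (∃ C : ℝ, ∀ t, ρ₁ t / ρ₂ t ≤ C) ∧ (∃ c > 0, ∀ t, c ≤ ρ₁ t / ρ₂ t)

/-- `ρ ∈ 𝓤_T`: `ρ ∈ 𝓤_∞` and `ρ ∼ ρ(· + s)` for every `s`. -/
def UT (ρ : ℝ → ℝ) : Prop :=
  UInfty ρ ∧ ∀ s : ℝ, equivW ρ fun t => ρ (t + s)

/-- `f(·,x) ∈ L²_loc` for each `x`. -/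
def L2locF (f : ℝ → E → E) : Prop := ∀ x : E, L2loc fun t => f t x

/-- Two-variable `S²`-almost automorphy `AS²(ℝ×L²(P,H))`. -/
def AS2F (f : ℝ → E → E) : Prop :=
  L2locF f ∧
  ∀ s' : ℕ → ℝ, ∃ φ : ℕ → ℕ, StrictMono φ ∧ ∃ g : ℝ → E → E, L2locF g ∧
    (∀ t : ℝ, ∀ x : E,
      Tendsto (fun n => ∫ s in t..(t + 1), ‖f (s + s' (φ n)) x - g s x‖ ^ 2) atTop (𝓝 0)) ∧
    (∀ t : ℝ, ∀ x : E,
      Tendsto (fun n => ∫ s in t..(t + 1), ‖g (s - s' (φ n)) x - f s x‖ ^ 2) atTop (𝓝 0))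

/-- Uniform stochastic continuity on bounded subsets, uniformly in `t`. -/
def UnifStochCont (f : ℝ → E → E) : Prop :=
  ∀ K' : Set E, Bornology.IsBounded K' → ∀ ε > 0, ∃ δ > 0,
    ∀ x ∈ K', ∀ y ∈ K', ‖x - y‖ ^ 2 < δ → ∀ t : ℝ, ‖f t x - f t y‖ ^ 2 < ε

/-- `h^b ∈ SPAA₀^{S²}(ℝ×L²(P,H),ρ)`. -/
def SPAA0S2F (ρ : ℝ → ℝ) (h : ℝ → E → E) : Prop :=
  ∀ x : E, SPAA0S2 ρ fun t => h t x

end Defs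

theorem saa_finite_cover {E : Type*} [NormedAddCommGroup E] (g : ℝ → E) (hg : SAA g)
    (t₀ δ : ℝ) (hδ : 0 < δ) :
    ∃ s : Finset ℝ, ∀ y : ℝ, ∃ x ∈ s, ‖g (t₀ - x + y) - g t₀‖ < δ := by
  by_contra hcon
  push Not at hcon
  obtain ⟨u, -, hu⟩ := exists_seq_of_forall_finset_exists (fun _ : ℝ => True)
    (fun x y => δ ≤ ‖g (t₀ - x + y) - g t₀‖) (fun s _ => by
      obtain ⟨y, hy⟩ := hcon s
      exact ⟨y, trivial, hy⟩)
  obtain ⟨k, hk, y, h1, h2⟩ := hg.2 u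
  have hpos : (0:ℝ) < (δ / 2) ^ 2 := by positivity
  obtain ⟨i, hi⟩ := ((h2 t₀).eventually_lt_const hpos).exists
  obtain ⟨n, hn, hin⟩ := (((h1 (t₀ - u (k i))).eventually_lt_const hpos).and
    (eventually_gt_atTop i)).exists
  have a1 := lt_of_pow_lt_pow_left₀ 2 (by positivity) hi
  have a2 := lt_of_pow_lt_pow_left₀ 2 (by positivity) hn
  have a3 := hu (k i) (k n) (hk hin)
  have a4 := norm_sub_le_norm_sub_add_norm_sub (g (t₀ - u (k i) + u (k n)))
    (y (t₀ - u (k i))) (g t₀)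
  linarith

theorem StochCont.continuous_aux {E : Type*} [NormedAddCommGroup E] {x : ℝ → E}
    (hx : StochCont x) : Continuous x := by
  rw [continuous_iff_continuousAt]
  intro s
  have h := (hx s).sqrt
  rw [ContinuousAt, tendsto_iff_norm_sub_tendsto_zero]
  simpa using h

theorem range_aux {E : Type*} [NormedAddCommGroup E]
    (ρ : ℝ → ℝ) (hρ : UInvSp E ρ)
    (f g φ : ℝ → E) (hg : SAA g) (hφ : SPAA0 ρ φ)
    (hf : ∀ t, f t = g t + φ t) :
    ∀ t₀ : ℝ, ∀ ε > 0, ∃ t : ℝ, ‖g t₀ - f t‖ < ε := by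
  intro t₀ ε hε
  by_contra hcon
  push Not at hcon
  obtain ⟨⟨hpos, hloc, hmu⟩, hinv⟩ := hρ
  obtain ⟨s, hs⟩ := saa_finite_cover g hg t₀ (ε / 2) (by positivity)
  have hlow : ∀ y, ε / 2 ≤ ∑ x ∈ s, ‖φ (y + (t₀ - x))‖ := by
    intro y
    obtain ⟨x, hxs, hx⟩ := hs y
    have h1 : ε / 2 ≤ ‖φ (y + (t₀ - x))‖ := by
      have h2 := hcon (t₀ - x + y)
      rw [hf, add_comm (t₀ - x) y] at h2
      rw [add_comm (t₀ - x) y] at hx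
      have h3 : g t₀ - (g (y + (t₀ - x)) + φ (y + (t₀ - x)))
        = -(g (y + (t₀ - x)) - g t₀) - φ (y + (t₀ - x)) := by abel
      rw [h3] at h2
      have h4 := norm_sub_le (-(g (y + (t₀ - x)) - g t₀)) (φ (y + (t₀ - x)))
      rw [norm_neg] at h4
      linarith
    exact h1.trans (Finset.single_le_sum (f := fun x => ‖φ (y + (t₀ - x))‖)
      (fun _ _ => norm_nonneg _) hxs)
  have hlim : Tendsto (fun T => ∑ x ∈ s, (muW ρ T)⁻¹ *
      ∫ t in (-T)..T, ‖φ (t + (t₀ - x))‖ * ρ t) atTop (𝓝 0) := by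
    have := tendsto_finsetSum s (fun x _ => (hinv φ hφ (t₀ - x)).2.2)
    simpa using this
  have hint : ∀ T : ℝ, IntervalIntegrable ρ volume (-T) T := fun T =>
    (hloc.integrableOn_isCompact isCompact_uIcc).intervalIntegrable
  have hintx : ∀ x T : ℝ, IntervalIntegrable (fun t => ‖φ (t + (t₀ - x))‖ * ρ t) volume (-T) T := by
    intro x T
    have hc := hφ.1.continuous_aux
    exact (hint T).continuousOn_mul (by fun_prop)
  have hev : ∀ᶠ T in atTop, ε / 2 ≤ ∑ x ∈ s, (muW ρ T)⁻¹ *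
      ∫ t in (-T)..T, ‖φ (t + (t₀ - x))‖ * ρ t := by
    filter_upwards [hmu.eventually_gt_atTop 0, eventually_ge_atTop 0] with T hT hT0
    rw [← Finset.mul_sum, ← intervalIntegral.integral_finsetSum (fun x _ => hintx x T),
      inv_mul_eq_div, le_div_iff₀ hT, muW, ← intervalIntegral.integral_const_mul]
    refine intervalIntegral.integral_mono_on (by linarith) ((hint T).const_mul _) ?_ ?_
    · have := IntervalIntegrable.sum s (fun x _ => hintx x T)
      simpa only [Finset.sum_fn] using this
    · intro t _
      rw [← Finset.sum_mul]
      exact mul_le_mul_of_nonneg_right (hlow t) (hpos t).le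
  have := ge_of_tendsto hlim hev
  linarith

variable {Ω : Type*} [MeasurableSpace Ω] {P : Measure Ω} [IsProbabilityMeasure P]
variable {H : Type*} [NormedAddCommGroup H] [InnerProductSpace ℝ H] [CompleteSpace H]
  [SecondCountableTopology H]

/-- Lemma 2.9. If `ρ ∈ 𝓤^inv` and `f = g + φ ∈ WPAA(ρ)` with `g ∈ SAA`
and `φ ∈ SPAA₀(ρ)`, then the range of `g` is contained in the closure of the range of `f`:
for every `t₀` and `ε > 0` there is `t` with `(E‖g(t₀) − f(t)‖²)^{1/2} < ε`. -/
theorem range_SAA_part_subset_closure_range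
    (ρ : ℝ → ℝ) (hρ : UInvSp (Lp H 2 P) ρ)
    (f g φ : ℝ → Lp H 2 P) (hg : SAA g) (hφ : SPAA0 ρ φ)
    (hf : ∀ t, f t = g t + φ t) :
    ∀ t₀ : ℝ, ∀ ε > 0, ∃ t : ℝ, ‖g t₀ - f t‖ < ε := by
  exact range_aux ρ hρ f g φ hg hφ hf
end
end

section
/- Let ρ ∈ 𝓤^inv. Then WPAA(ρ) equipped with the norm ‖f‖_∞ = sup_{t∈ℝ}(E‖f(t)‖²)^{1/2} is a Banach space; that is, every sequence (fₙ) in WPAA(ρ) that is Cauchy with respect to ‖·‖_∞ converges uniformly in square mean to a limit f that again belongs to WPAA(ρ). -/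
open MeasureTheory Filter Set Topology

noncomputable section

section Helpers

variable {E : Type*} [NormedAddCommGroup E]

lemma sqTendsto {α : Type*} {l : Filter α} {x : α → E} {y : E} :
    Tendsto (fun n => ‖x n - y‖ ^ 2) l (𝓝 0) ↔ Tendsto x l (𝓝 y) := by
  constructor
  · intro h
    have := (Real.continuous_sqrt.tendsto 0).comp h
    refine tendsto_iff_norm_sub_tendsto_zero.2 ?_
    simpa only [Function.comp_def, Real.sqrt_sq (norm_nonneg _), Real.sqrt_zero] using this
  · intro h
    have := (tendsto_iff_norm_sub_tendsto_zero.1 h).pow 2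
    simpa only [ne_eq, OfNat.ofNat_ne_zero, not_false_eq_true, zero_pow] using this

lemma stochCont_iff {x : ℝ → E} : StochCont x ↔ Continuous x := by
  unfold StochCont
  simp only [sqTendsto, continuous_iff_continuousAt, ContinuousAt]

lemma saa_iff {x : ℝ → E} : SAA x ↔ (Continuous x ∧
    ∀ s' : ℕ → ℝ, ∃ φ : ℕ → ℕ, StrictMono φ ∧ ∃ y : ℝ → E,
    (∀ t : ℝ, Tendsto (fun n => x (t + s' (φ n))) atTop (𝓝 (y t))) ∧
    (∀ t : ℝ, Tendsto (fun n => y (t - s' (φ n))) atTop (𝓝 (x t)))) := by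
  unfold SAA
  simp only [sqTendsto, stochCont_iff]

lemma saa_sub {x z : ℝ → E} (hx : SAA x) (hz : SAA z) : SAA (fun t => x t - z t) := by
  rw [saa_iff] at *
  refine ⟨hx.1.sub hz.1, fun s => ?_⟩
  obtain ⟨φ, hφ, y, h1, h2⟩ := hx.2 s
  obtain ⟨ψ, hψ, w, h3, h4⟩ := hz.2 (fun n => s (φ n))
  refine ⟨φ ∘ ψ, hφ.comp hψ, fun t => y t - w t, fun t => ?_, fun t => ?_⟩
  · exact ((h1 t).comp hψ.tendsto_atTop).sub (h3 t)
  · exact ((h2 t).comp hψ.tendsto_atTop).sub (h4 t)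

lemma swapLim {a : ℕ → ℕ → E} {A : ℕ → E} {b : ℕ → E} {B : E}
    (h : ∀ ε > 0, ∃ k, (∀ n, ‖a k n - A n‖ ≤ ε) ∧ ‖b k - B‖ ≤ ε)
    (hk : ∀ k, Tendsto (a k) atTop (𝓝 (b k))) : Tendsto A atTop (𝓝 B) := by
  rw [Metric.tendsto_atTop]
  intro ε hε
  obtain ⟨k, h1, h2⟩ := h (ε / 4) (by positivity)
  obtain ⟨N, hN⟩ := Metric.tendsto_atTop.1 (hk k) (ε / 4) (by positivity)
  refine ⟨N, fun n hn => ?_⟩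
  have h3 := hN n hn
  have h4 := h1 n
  rw [← dist_eq_norm] at h2 h4
  rw [dist_comm] at h4
  have := dist_triangle4 (A n) (a k n) (b k) B
  linarith

lemma unifLim [CompleteSpace E] {f : ℕ → ℝ → E}
    (h : ∀ ε > 0, ∃ N : ℕ, ∀ m ≥ N, ∀ n ≥ N, ∀ t : ℝ, ‖f m t - f n t‖ ≤ ε) :
    ∃ g : ℝ → E, ∀ ε > 0, ∃ N : ℕ, ∀ n ≥ N, ∀ t : ℝ, ‖f n t - g t‖ ≤ ε := by
  have hc : ∀ t, ∃ y, Tendsto (fun n => f n t) atTop (𝓝 y) := by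
    intro t
    apply cauchySeq_tendsto_of_complete
    rw [Metric.cauchySeq_iff]
    intro ε hε
    obtain ⟨N, hN⟩ := h (ε / 2) (by positivity)
    refine ⟨N, fun m hm n hn => ?_⟩
    rw [dist_eq_norm]
    linarith [hN m hm n hn t]
  choose g hg using hc
  refine ⟨g, fun ε hε => ?_⟩
  obtain ⟨N, hN⟩ := h ε hε
  refine ⟨N, fun n hn t => ?_⟩
  refine le_of_tendsto ((tendsto_const_nhds.sub (hg t)).norm) ?_
  filter_upwards [eventually_ge_atTop N] with m hm
  exact hN n hn m hm t

lemma contLim {f : ℕ → ℝ → E} {g : ℝ → E} (hf : ∀ n, Continuous (f n))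
    (h : ∀ ε > 0, ∃ N : ℕ, ∀ n ≥ N, ∀ t : ℝ, ‖f n t - g t‖ ≤ ε) : Continuous g := by
  have : TendstoUniformly f g atTop := by
    rw [Metric.tendstoUniformly_iff]
    intro ε hε
    obtain ⟨N, hN⟩ := h (ε / 2) (by positivity)
    filter_upwards [eventually_ge_atTop N] with n hn t
    rw [dist_comm, dist_eq_norm]
    linarith [hN n hn t]
  exact this.continuous (Frequently.of_forall hf)

/-- Diagonal extraction. -/
lemma diagSeq {g : ℕ → ℝ → E} (hg : ∀ k, SAA (g k)) (s : ℕ → ℝ) :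
    ∃ d : ℕ → ℕ, StrictMono d ∧ ∀ k, ∃ y : ℝ → E,
    (∀ t : ℝ, Tendsto (fun n => g k (t + s (d n))) atTop (𝓝 (y t))) ∧
    (∀ t : ℝ, Tendsto (fun n => y (t - s (d n))) atTop (𝓝 (g k t))) := by
  have hg' := fun k => (saa_iff.1 (hg k)).2
  choose φ hφ y h1 h2 using hg'
  let Φ : ℕ → ℕ → ℕ := fun k => Nat.rec (φ 0 s) (fun k F => F ∘ φ (k + 1) (fun n => s (F n))) k
  have hΦ : ∀ k, Φ (k + 1) = Φ k ∘ φ (k + 1) (fun n => s (Φ k n)) := fun k => rfl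
  have hm : ∀ k, StrictMono (Φ k) := by
    intro k
    induction k with
    | zero => exact hφ 0 s
    | succ k ih => rw [hΦ]; exact ih.comp (hφ _ _)
  have hlim : ∀ k, ∃ y : ℝ → E,
    (∀ t : ℝ, Tendsto (fun n => g k (t + s (Φ k n))) atTop (𝓝 (y t))) ∧
    (∀ t : ℝ, Tendsto (fun n => y (t - s (Φ k n))) atTop (𝓝 (g k t))) := by
    intro k
    cases k with
    | zero => exact ⟨_, h1 0 s, h2 0 s⟩
    | succ k => exact ⟨_, h1 (k + 1) (fun n => s (Φ k n)), h2 (k + 1) (fun n => s (Φ k n))⟩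
  have hχ : ∀ k j, ∃ χ : ℕ → ℕ, StrictMono χ ∧ Φ (k + j) = Φ k ∘ χ := by
    intro k j
    induction j with
    | zero => exact ⟨id, strictMono_id, rfl⟩
    | succ j ih =>
      obtain ⟨χ, hc, he⟩ := ih
      refine ⟨χ ∘ φ (k + j + 1) (fun n => s (Φ (k + j) n)), hc.comp (hφ _ _), ?_⟩
      rw [← add_assoc, hΦ, ← Function.comp_assoc, ← he]
  refine ⟨fun n => Φ n n, strictMono_nat_of_lt_succ fun n => ?_, fun k => ?_⟩
  · rw [hΦ]
    apply hm n
    exact lt_of_lt_of_le (Nat.lt_succ_self n) ((hφ _ _).id_le (n + 1))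
  · have hθ : ∀ n, ∃ m, k ≤ n → (n ≤ m ∧ Φ n n = Φ k m) := by
      intro n
      by_cases hn : k ≤ n
      · obtain ⟨χ, hc, he⟩ := hχ k (n - k)
        rw [Nat.add_sub_cancel' hn] at he
        exact ⟨χ n, fun _ => ⟨hc.id_le n, by rw [he]; rfl⟩⟩
      · exact ⟨0, fun h => absurd h hn⟩
    choose θ hθ using hθ
    have hθt : Tendsto θ atTop atTop := by
      refine tendsto_atTop_mono' atTop ?_ tendsto_id
      filter_upwards [eventually_ge_atTop k] with n hn
      exact (hθ n hn).1
    obtain ⟨y, ha, hb⟩ := hlim k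
    refine ⟨y, fun t => ((ha t).comp hθt).congr' ?_, fun t => ((hb t).comp hθt).congr' ?_⟩
    · filter_upwards [eventually_ge_atTop k] with n hn
      simp only [Function.comp, (hθ n hn).2]
    · filter_upwards [eventually_ge_atTop k] with n hn
      simp only [Function.comp, (hθ n hn).2]

lemma saa_lim [CompleteSpace E] {g : ℕ → ℝ → E} (hg : ∀ k, SAA (g k)) {G : ℝ → E}
    (h : ∀ ε > 0, ∃ N : ℕ, ∀ n ≥ N, ∀ t : ℝ, ‖g n t - G t‖ ≤ ε) : SAA G := by
  refine saa_iff.2 ⟨contLim (fun k => (saa_iff.1 (hg k)).1) h, fun s => ?_⟩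
  obtain ⟨d, hd, hy⟩ := diagSeq hg s
  choose y h1 h2 using hy
  have hc : ∀ ε > 0, ∃ N : ℕ, ∀ m ≥ N, ∀ n ≥ N, ∀ t : ℝ, ‖y m t - y n t‖ ≤ ε := by
    intro ε hε
    obtain ⟨N, hN⟩ := h (ε / 2) (by positivity)
    refine ⟨N, fun m hm n hn t => ?_⟩
    refine le_of_tendsto (((h1 m t).sub (h1 n t)).norm) (Eventually.of_forall fun i => ?_)
    have e1 := hN m hm (t + s (d i))
    have e2 := hN n hn (t + s (d i))
    have := norm_sub_le_norm_sub_add_norm_sub (g m (t + s (d i))) (G (t + s (d i)))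
      (g n (t + s (d i)))
    rw [norm_sub_rev (G _)] at this
    linarith
  obtain ⟨Y, hY⟩ := unifLim hc
  have key : ∀ ε > 0, ∃ k, (∀ t, ‖g k t - G t‖ ≤ ε) ∧ (∀ t, ‖y k t - Y t‖ ≤ ε) := by
    intro ε hε
    obtain ⟨N, hN⟩ := h ε hε
    obtain ⟨M, hM⟩ := hY ε hε
    exact ⟨max N M, hN _ (le_max_left _ _), hM _ (le_max_right _ _)⟩
  refine ⟨d, hd, Y, fun t => ?_, fun t => ?_⟩
  · refine swapLim (fun ε hε => ?_) (fun k => h1 k t)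
    obtain ⟨k, ha, hb⟩ := key ε hε
    exact ⟨k, fun n => ha _, hb t⟩
  · refine swapLim (fun ε hε => ?_) (fun k => h2 k t)
    obtain ⟨k, ha, hb⟩ := key ε hε
    exact ⟨k, fun n => hb _, ha t⟩

/-- Finite covering by translates. -/
lemma saa_cover {u : ℝ → E} (hu : SAA u) (t0 ε : ℝ) (hε : 0 < ε) :
    ∃ S : Finset ℝ, ∀ t, ∃ s ∈ S, ‖u (t0 + (t - s)) - u t0‖ < ε := by
  by_contra! hcon
  choose T hT using hcon
  -- choose a sequence avoiding the earlier translates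
  let L : ℕ → Finset ℝ := fun n => Nat.rec ∅ (fun _ S => insert (T S) S) n
  let s : ℕ → ℝ := fun n => T (L n)
  have hL : ∀ n, L (n + 1) = insert (s n) (L n) := fun n => rfl
  have hmem : ∀ n j, j < n → s j ∈ L n := by
    intro n
    induction n with
    | zero => intro j hj; omega
    | succ n ih =>
      intro j hj
      rw [hL, Finset.mem_insert]
      rcases Nat.lt_succ_iff_lt_or_eq.1 hj with h | h
      · exact Or.inr (ih j h)
      · exact Or.inl (by rw [h])
  have hav : ∀ n j, j < n → ε ≤ ‖u (t0 + (s n - s j)) - u t0‖ :=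
    fun n j hj => hT (L n) (s j) (hmem n j hj)
  obtain ⟨φ, hφ, y, h1, h2⟩ := (saa_iff.1 hu).2 s
  obtain ⟨j, hj⟩ := (Metric.tendsto_atTop.1 (h2 t0) (ε / 2) (by positivity))
  have hj := hj j le_rfl
  obtain ⟨N, hN⟩ := (Metric.tendsto_atTop.1 (h1 (t0 - s (φ j))) (ε / 2) (by positivity))
  have hn := hN (max N (j + 1)) (le_max_left _ _)
  have hlt : φ j < φ (max N (j + 1)) := hφ (lt_of_lt_of_le (Nat.lt_succ_self j) (le_max_right _ _))
  have h3 := hav _ _ hlt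
  rw [← dist_eq_norm] at h3
  have e : t0 + (s (φ (max N (j + 1))) - s (φ j)) = t0 - s (φ j) + s (φ (max N (j + 1))) := by ring
  rw [e] at h3
  have := dist_triangle (u (t0 - s (φ j) + s (φ (max N (j + 1))))) (y (t0 - s (φ j))) (u t0)
  linarith

lemma locInt {ρ : ℝ → ℝ} (hρ : LocallyIntegrable ρ) (a b : ℝ) :
    IntervalIntegrable ρ volume a b :=
  (hρ.integrableOn_isCompact isCompact_uIcc).intervalIntegrable

lemma intNormMul {ρ : ℝ → ℝ} (hρ : LocallyIntegrable ρ) {x : ℝ → E} (hx : Continuous x) (a b : ℝ) :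
    IntervalIntegrable (fun t => ‖x t‖ * ρ t) volume a b :=
  (locInt hρ a b).continuousOn_mul hx.norm.continuousOn

lemma ergo_bound {ρ : ℝ → ℝ} {u v : ℝ → E} (hρ : UInfty ρ) (hu : SAA u)
    (hvc : Continuous v)
    (hv : ∀ τ : ℝ, Tendsto (fun T => (muW ρ T)⁻¹ * ∫ t in (-T)..T, ‖v (t + τ)‖ * ρ t) atTop (𝓝 0))
    {δ : ℝ} (h : ∀ t, ‖u t + v t‖ ≤ δ) : ∀ t, ‖u t‖ ≤ δ := by
  intro t0
  by_contra! hlt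
  obtain ⟨ε, hε, hle⟩ : ∃ ε > 0, ‖u t0‖ = δ + 2 * ε := ⟨(‖u t0‖ - δ) / 2, by linarith, by ring⟩
  obtain ⟨S, hS⟩ := saa_cover hu t0 ε hε
  have hsum : ∀ t, ε ≤ ∑ s ∈ S, ‖v (t + (t0 - s))‖ := by
    intro t
    obtain ⟨s, hs, hc⟩ := hS t
    have e : t0 + (t - s) = t + (t0 - s) := by ring
    rw [e] at hc
    refine le_trans ?_ (Finset.single_le_sum (f := fun s => ‖v (t + (t0 - s))‖)
      (fun i _ => norm_nonneg _) hs)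
    have e1 := h (t + (t0 - s))
    have e2 := norm_sub_norm_le (u t0) (u (t + (t0 - s)))
    rw [norm_sub_rev] at e2
    have e3 := norm_sub_le (u (t + (t0 - s)) + v (t + (t0 - s))) (v (t + (t0 - s)))
    rw [add_sub_cancel_right] at e3
    show ε ≤ ‖v (t + (t0 - s))‖
    linarith
  have hlim := tendsto_finsetSum S (fun s _ => hv (t0 - s))
  simp only [Finset.sum_const_zero] at hlim
  have : ε ≤ 0 := by
    refine ge_of_tendsto hlim ?_
    filter_upwards [hρ.2.2.eventually_gt_atTop 0, eventually_ge_atTop 0] with T hμ hT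
    have hi : ∀ s ∈ S, IntervalIntegrable (fun t => ‖v (t + (t0 - s))‖ * ρ t) volume (-T) T :=
      fun s _ => intNormMul hρ.2.1 (hvc.comp (continuous_id.add continuous_const)) _ _
    rw [← Finset.mul_sum, ← intervalIntegral.integral_finsetSum hi,
      inv_mul_eq_div, le_div_iff₀ hμ]
    unfold muW
    rw [← intervalIntegral.integral_const_mul]
    refine intervalIntegral.integral_mono (by linarith)
      ((locInt hρ.2.1 _ _).const_mul ε) ?_ ?_
    · have := IntervalIntegrable.sum S hi
      simpa only [Finset.sum_fn] using this
    · intro t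
      simp only [← Finset.sum_mul]
      exact mul_le_mul_of_nonneg_right (hsum t) (hρ.1 t).le
  linarith

lemma stochBdd_iff {x : ℝ → E} : StochBdd x ↔ ∃ M : ℝ, ∀ t : ℝ, ‖x t‖ ≤ M := by
  constructor
  · rintro ⟨M, hM⟩
    exact ⟨√M, fun t => Real.le_sqrt_of_sq_le (hM t)⟩
  · rintro ⟨M, hM⟩
    exact ⟨M ^ 2, fun t => pow_le_pow_left₀ (norm_nonneg _) (hM t) 2⟩

lemma mean_le {ρ : ℝ → ℝ} (hρ : UInfty ρ) {x a b : ℝ → E} (hx : Continuous x)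
    (ha : Continuous a) (hb : Continuous b) {ε : ℝ} (h : ∀ t, ‖x t‖ ≤ ε + ‖a t‖ + ‖b t‖) :
    ∀ᶠ T in atTop, (muW ρ T)⁻¹ * ∫ t in (-T)..T, ‖x t‖ * ρ t ≤
      ε + ((muW ρ T)⁻¹ * ∫ t in (-T)..T, ‖a t‖ * ρ t)
        + ((muW ρ T)⁻¹ * ∫ t in (-T)..T, ‖b t‖ * ρ t) := by
  filter_upwards [hρ.2.2.eventually_gt_atTop 0, eventually_ge_atTop 0] with T hμ hT
  have i1 := intNormMul hρ.2.1 ha (-T) T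
  have i2 := intNormMul hρ.2.1 hb (-T) T
  have i0 : IntervalIntegrable (fun t => ε * ρ t) volume (-T) T :=
    (locInt hρ.2.1 _ _).const_mul ε
  have key : ∫ t in (-T)..T, ‖x t‖ * ρ t ≤
      ε * muW ρ T + (∫ t in (-T)..T, ‖a t‖ * ρ t) + ∫ t in (-T)..T, ‖b t‖ * ρ t := by
    unfold muW
    rw [← intervalIntegral.integral_const_mul, ← intervalIntegral.integral_add i0 i1,
      ← intervalIntegral.integral_add (i0.add i1) i2]
    refine intervalIntegral.integral_mono (by linarith) (intNormMul hρ.2.1 hx _ _)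
      ((i0.add i1).add i2) fun t => ?_
    have := mul_le_mul_of_nonneg_right (h t) (hρ.1 t).le
    simp only
    linarith
  calc _ ≤ (muW ρ T)⁻¹ * (ε * muW ρ T + (∫ t in (-T)..T, ‖a t‖ * ρ t)
        + ∫ t in (-T)..T, ‖b t‖ * ρ t) := by gcongr
    _ = _ := by field_simp

lemma mean_nonneg {ρ : ℝ → ℝ} (hρ : UInfty ρ) (x : ℝ → E) :
    ∀ᶠ T in atTop, 0 ≤ (muW ρ T)⁻¹ * ∫ t in (-T)..T, ‖x t‖ * ρ t := by
  filter_upwards [hρ.2.2.eventually_gt_atTop 0, eventually_ge_atTop 0] with T hμ hT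
  refine mul_nonneg (inv_nonneg.2 hμ.le) (intervalIntegral.integral_nonneg (by linarith) ?_)
  exact fun t _ => mul_nonneg (norm_nonneg _) (hρ.1 t).le

lemma spaa0_sub {ρ : ℝ → ℝ} (hρ : UInfty ρ) {a b : ℝ → E} (ha : SPAA0 ρ a) (hb : SPAA0 ρ b) :
    SPAA0 ρ (fun t => a t - b t) := by
  obtain ⟨a1, a2, a3⟩ := ha
  obtain ⟨b1, b2, b3⟩ := hb
  rw [stochCont_iff] at a1 b1
  obtain ⟨A, hA⟩ := stochBdd_iff.1 a2
  obtain ⟨B, hB⟩ := stochBdd_iff.1 b2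
  refine ⟨stochCont_iff.2 (a1.sub b1), stochBdd_iff.2 ⟨A + B, fun t => ?_⟩, ?_⟩
  · exact (norm_sub_le _ _).trans (add_le_add (hA t) (hB t))
  · have hs := (a3.add b3).const_add 0
    simp only [add_zero] at hs
    refine tendsto_of_tendsto_of_tendsto_of_le_of_le' tendsto_const_nhds hs
      (mean_nonneg hρ _) ?_
    have := mean_le hρ (a1.sub b1) a1 b1 (ε := 0)
      (fun t => by simpa using norm_sub_le (a t) (b t))
    filter_upwards [this] with T hT
    simp only [Pi.sub_apply] at hT
    linarith

lemma spaa0_lim {ρ : ℝ → ℝ} (hρ : UInfty ρ) {f : ℕ → ℝ → E} {g : ℝ → E}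
    (hf : ∀ n, SPAA0 ρ (f n))
    (h : ∀ ε > 0, ∃ N : ℕ, ∀ n ≥ N, ∀ t : ℝ, ‖f n t - g t‖ ≤ ε) : SPAA0 ρ g := by
  have hfc := fun n => stochCont_iff.1 (hf n).1
  have hgc := contLim hfc h
  have hle : ∀ n t, ‖g t‖ ≤ ‖f n t - g t‖ + ‖f n t‖ := by
    intro n t
    have := norm_sub_le (f n t) (f n t - g t)
    rw [sub_sub_cancel] at this
    linarith
  refine ⟨stochCont_iff.2 hgc, ?_, ?_⟩
  · obtain ⟨N, hN⟩ := h 1 one_pos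
    obtain ⟨M, hM⟩ := stochBdd_iff.1 (hf N).2.1
    exact stochBdd_iff.2 ⟨1 + M, fun t => by linarith [hle N t, hN N le_rfl t, hM t]⟩
  · rw [Metric.tendsto_nhds]
    intro ε hε
    obtain ⟨N, hN⟩ := h (ε / 2) (by positivity)
    have hm := mean_le hρ hgc (hfc N) (continuous_const (y := (0 : E))) (ε := ε / 2)
      (fun t => by simpa using (hle N t).trans (by gcongr; exact hN N le_rfl t))
    have h2 := (hf N).2.2.eventually_lt_const (show (0 : ℝ) < ε / 2 by positivity)
    filter_upwards [hm, h2, mean_nonneg hρ g] with T a b c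
    simp only [norm_zero, zero_mul, intervalIntegral.integral_zero, mul_zero, add_zero] at a
    rw [Real.dist_eq, sub_zero, abs_of_nonneg c]
    linarith

end Helpers

variable {Ω : Type*} [MeasurableSpace Ω] {P : Measure Ω} [IsProbabilityMeasure P]
variable {H : Type*} [NormedAddCommGroup H] [InnerProductSpace ℝ H] [CompleteSpace H]
  [SecondCountableTopology H]

/-- Theorem 2.10. For `ρ ∈ 𝓤^inv`, `WPAA(ρ)` with the norm
`‖f‖_∞ = sup_t (E‖f(t)‖²)^{1/2}` is complete: every Cauchy sequence in `WPAA(ρ)`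
converges uniformly in square mean to a limit that again lies in `WPAA(ρ)`. -/
theorem WPAA_complete
    (ρ : ℝ → ℝ) (hρ : UInvSp (Lp H 2 P) ρ)
    (f : ℕ → ℝ → Lp H 2 P) (hf : ∀ n, WPAA ρ (f n))
    (hcauchy : ∀ ε > 0, ∃ N : ℕ, ∀ m ≥ N, ∀ n ≥ N, ∀ t : ℝ, ‖f m t - f n t‖ < ε) :
    ∃ g : ℝ → Lp H 2 P, WPAA ρ g ∧
      ∀ ε > 0, ∃ N : ℕ, ∀ n ≥ N, ∀ t : ℝ, ‖f n t - g t‖ < ε := by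
  have hU := hρ.1
  choose G K hG hK hGK using hf
  have hGc : ∀ ε > 0, ∃ N : ℕ, ∀ m ≥ N, ∀ n ≥ N, ∀ t : ℝ, ‖G m t - G n t‖ ≤ ε := by
    intro ε hε
    obtain ⟨N, hN⟩ := hcauchy ε hε
    refine ⟨N, fun m hm n hn => ?_⟩
    have hs := spaa0_sub hU (hK m) (hK n)
    refine ergo_bound (v := fun t => K m t - K n t) hU (saa_sub (hG m) (hG n))
      (stochCont_iff.1 hs.1) (fun τ => (hρ.2 _ hs τ).2.2) (fun t => ?_)
    have := (hN m hm n hn t).le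
    rw [hGK, hGK] at this
    have e : G m t - G n t + (K m t - K n t) = G m t + K m t - (G n t + K n t) := by abel
    show ‖G m t - G n t + (K m t - K n t)‖ ≤ ε
    rw [e]
    exact this
  obtain ⟨g, hg⟩ := unifLim hGc
  obtain ⟨F, hF⟩ := unifLim (f := f) (fun ε hε => by
    obtain ⟨N, hN⟩ := hcauchy ε hε
    exact ⟨N, fun m hm n hn t => (hN m hm n hn t).le⟩)
  refine ⟨F, ⟨g, fun t => F t - g t, saa_lim hG hg, spaa0_lim hU hK fun ε hε => ?_,
    fun t => (add_sub_cancel (g t) (F t)).symm⟩, fun ε hε => ?_⟩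
  · obtain ⟨N, hN⟩ := hg (ε / 2) (by positivity)
    obtain ⟨M, hM⟩ := hF (ε / 2) (by positivity)
    refine ⟨max N M, fun n hn t => ?_⟩
    have e1 := hN n (le_of_max_le_left hn) t
    have e2 := hM n (le_of_max_le_right hn) t
    have e : K n t - (F t - g t) = (f n t - F t) - (G n t - g t) := by
      rw [hGK]; abel
    rw [e]
    linarith [norm_sub_le (f n t - F t) (G n t - g t)]
  · obtain ⟨N, hN⟩ := hF (ε / 2) (by positivity)
    exact ⟨N, fun n hn t => by linarith [hN n hn t]⟩
end
end

section
/- Let ρ ∈ 𝓤^inv. If f ∈ WPAA(ρ), then f ∈ WPAAS²(ρ); that is, every square-mean weighted pseudo almost automorphic process is S²-weighted pseudo almost automorphic (with the same weight ρ). -/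
open MeasureTheory Filter Set Topology

noncomputable section

section Aux

variable {E : Type*} [NormedAddCommGroup E]

theorem tendsto_of_sq_norm {ι : Type*} {l : Filter ι} {x : ι → E} {a : E}
    (h : Tendsto (fun t => ‖x t - a‖ ^ 2) l (𝓝 0)) : Tendsto x l (𝓝 a) := by
  rw [tendsto_iff_norm_sub_tendsto_zero]
  have := (Real.continuous_sqrt.tendsto 0).comp h
  simpa [Function.comp_def, Real.sqrt_sq (norm_nonneg _)] using this

theorem StochCont.cont {x : ℝ → E} (h : StochCont x) : Continuous x :=
  continuous_iff_continuousAt.2 fun s => tendsto_of_sq_norm (h s)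

theorem StochBdd.bdd {x : ℝ → E} (h : StochBdd x) : ∃ M : ℝ, 0 ≤ M ∧ ∀ t, ‖x t‖ ≤ M := by
  obtain ⟨M, hM⟩ := h
  refine ⟨Real.sqrt M, Real.sqrt_nonneg _, fun t => Real.le_sqrt_of_sq_le (hM t)⟩

theorem SAA.bdd {x : ℝ → E} (h : SAA x) : ∃ M : ℝ, 0 ≤ M ∧ ∀ t, ‖x t‖ ≤ M := by
  by_contra! hc
  have hc' : ∀ n : ℕ, ∃ t, (n : ℝ) < ‖x t‖ := fun n => hc n (Nat.cast_nonneg n)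
  choose s hs using hc'
  obtain ⟨φ, hφ, y, hy, -⟩ := h.2 s
  have h1 : Tendsto (fun n => x (0 + s (φ n))) atTop (𝓝 (y 0)) := tendsto_of_sq_norm (hy 0)
  have h2 := h1.norm
  have h3 : Tendsto (fun n => ‖x (0 + s (φ n))‖) atTop atTop := by
    refine tendsto_atTop_mono (fun n => ?_)
      ((tendsto_natCast_atTop_atTop (R := ℝ)).comp hφ.tendsto_atTop)
    simpa using (hs (φ n)).le
  exact not_tendsto_atTop_of_tendsto_nhds h2 h3

theorem dct_aux {F : ℕ → ℝ → E} {y : ℝ → E} {M : ℝ} (t : ℝ)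
    (hF : ∀ n, StronglyMeasurable (F n))
    (hb : ∀ n s, ‖F n s‖ ≤ M) (hl : ∀ s, Tendsto (fun n => ‖F n s‖ ^ 2) atTop (𝓝 0)) :
    Tendsto (fun n => ∫ s in t..(t + 1), ‖F n s‖ ^ 2) atTop (𝓝 0) := by
  have := intervalIntegral.tendsto_integral_filter_of_dominated_convergence (μ := volume)
    (a := t) (b := t + 1) (l := atTop) (F := fun n s => ‖F n s‖ ^ 2) (f := fun _ => (0 : ℝ))
    (fun _ => M ^ 2)
    (Eventually.of_forall fun n => ((hF n).norm.pow 2).aestronglyMeasurable)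
    (Eventually.of_forall fun n => Eventually.of_forall fun s _ => by
      rw [Real.norm_of_nonneg (by positivity)]
      exact pow_le_pow_left₀ (norm_nonneg _) (hb n s) 2)
    intervalIntegrable_const
    (Eventually.of_forall fun s _ => hl s)
  simpa using this

theorem l2loc_of_bdd {y : ℝ → E} {M : ℝ} (hy : StronglyMeasurable y) (hb : ∀ s, ‖y s‖ ≤ M) :
    L2loc y := by
  intro K hK
  refine Measure.integrableOn_of_bounded (M := M ^ 2) hK.measure_lt_top.ne
    (hy.norm.pow 2).aestronglyMeasurable (Eventually.of_forall fun s => ?_)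
  rw [Real.norm_of_nonneg (by positivity)]
  exact pow_le_pow_left₀ (norm_nonneg _) (hb s) 2

theorem SAA.as2 {g : ℝ → E} (h : SAA g) : AS2 g := by
  obtain ⟨M, hM0, hM⟩ := h.bdd
  have hc := h.1.cont
  refine ⟨l2loc_of_bdd hc.stronglyMeasurable hM, fun s' => ?_⟩
  obtain ⟨φ, hφ, y, h1, h2⟩ := h.2 s'
  have hlim : ∀ t, Tendsto (fun n => g (t + s' (φ n))) atTop (𝓝 (y t)) :=
    fun t => tendsto_of_sq_norm (h1 t)
  have hgm : ∀ n, StronglyMeasurable fun t => g (t + s' (φ n)) := fun n =>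
    (hc.comp (continuous_id.add continuous_const)).stronglyMeasurable
  have hym : StronglyMeasurable y :=
    stronglyMeasurable_of_tendsto atTop hgm (tendsto_pi_nhds.2 hlim)
  have hyb : ∀ t, ‖y t‖ ≤ M := fun t =>
    le_of_tendsto (hlim t).norm (Eventually.of_forall fun n => hM _)
  refine ⟨φ, hφ, y, l2loc_of_bdd hym hyb, fun t => ?_, fun t => ?_⟩
  · refine dct_aux (y := y) (M := M + M) t (fun n => (hgm n).sub hym) (fun n s => ?_) h1
    exact (norm_sub_le _ _).trans (add_le_add (hM _) (hyb _))
  · refine dct_aux (y := y) (M := M + M) t (fun n => ?_) (fun n s => ?_) h2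
    · exact (hym.comp_measurable (measurable_id.sub_const _)).sub hc.stronglyMeasurable
    · exact (norm_sub_le _ _).trans (add_le_add (hyb _) (hM _))

theorem key_aux {ρ u : ℝ → ℝ} (hρ : UInfty ρ) (hu : Continuous u) (h0 : ∀ t, 0 ≤ u t)
    {M : ℝ} (hM : ∀ t, u t ≤ M)
    (hlim : ∀ τ, Tendsto (fun T => (muW ρ T)⁻¹ * ∫ t in (-T)..T, u (t + τ) * ρ t) atTop (𝓝 0)) :
    Tendsto (fun T => (muW ρ T)⁻¹ *
      ∫ t in (-T)..T, Real.sqrt (∫ s in t..(t + 1), u s ^ 2) * ρ t) atTop (𝓝 0) := by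
  obtain ⟨hpos, hloc, hinf⟩ := hρ
  have hM0 : 0 ≤ M := (h0 0).trans (hM 0)
  have hρi : ∀ a b, IntervalIntegrable ρ volume a b := fun a b =>
    (hloc.integrableOn_isCompact isCompact_uIcc).intervalIntegrable
  have hmul : ∀ {v : ℝ → ℝ}, Continuous v → ∀ a b,
      IntervalIntegrable (fun t => v t * ρ t) volume a b := fun hv a b =>
    (hρi a b).continuousOn_mul hv.continuousOn
  have hev : ∀ᶠ T in atTop, 0 < muW ρ T ∧ 0 ≤ T :=
    (hinf.eventually_gt_atTop 0).and (eventually_ge_atTop 0)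
  -- the window function
  have hW : ∀ t, ∫ s in t..(t + 1), u s ^ 2 = ∫ s in (0:ℝ)..1, u (t + s) ^ 2 := fun t => by
    rw [intervalIntegral.integral_comp_add_left (fun s => u s ^ 2) t, add_zero]
  simp only [hW]
  set W : ℝ → ℝ := fun t => ∫ s in (0:ℝ)..1, u (t + s) ^ 2 with hWdef
  have hWc : Continuous W :=
    intervalIntegral.continuous_parametric_intervalIntegral_of_continuous'
      (f := fun t s => u (t + s) ^ 2) (by simp only [Function.uncurry_def]; fun_prop) 0 1
  have hW0 : ∀ t, 0 ≤ W t := fun t =>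
    intervalIntegral.integral_nonneg zero_le_one fun s _ => by positivity
  -- product integrability
  have hprod : ∀ T, Integrable (fun p : ℝ × ℝ => u (p.1 + p.2) ^ 2 * ρ p.1)
      ((volume.restrict (uIoc (-T) T)).prod (volume.restrict (uIoc (0:ℝ) 1))) := fun T => by
    have hr : Integrable (fun p : ℝ × ℝ => ρ p.1 * (1:ℝ))
        ((volume.restrict (uIoc (-T) T)).prod (volume.restrict (uIoc (0:ℝ) 1))) :=
      Integrable.mul_prod (f := ρ) (g := fun _ => (1:ℝ))
        (intervalIntegrable_iff.1 (hρi _ _)) (intervalIntegrable_iff.1 intervalIntegrable_const)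
    simp only [mul_one] at hr
    refine hr.bdd_mul (c := M ^ 2) (f := fun p : ℝ × ℝ => u (p.1 + p.2) ^ 2)
      (Continuous.aestronglyMeasurable (by fun_prop)) (Eventually.of_forall fun p => ?_)
    rw [Real.norm_of_nonneg (by positivity)]
    exact pow_le_pow_left₀ (h0 _) (hM _) 2
  have hB : Tendsto (fun T => (muW ρ T)⁻¹ * ∫ t in (-T)..T, W t * ρ t) atTop (𝓝 0) := by
    have hsw : ∀ᶠ T in atTop, (∫ s in (0:ℝ)..1, (muW ρ T)⁻¹ * ∫ t in (-T)..T, u (t + s) ^ 2 * ρ t)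
        = (muW ρ T)⁻¹ * ∫ t in (-T)..T, W t * ρ t := by
      filter_upwards [hev] with T hT
      have hTT : -T ≤ T := by linarith [hT.2]
      rw [intervalIntegral.integral_const_mul]
      congr 1
      have := integral_integral_swap (f := fun t s => u (t + s) ^ 2 * ρ t) (hprod T)
      rw [uIoc_of_le hTT, uIoc_of_le (zero_le_one (α := ℝ))] at this
      simp only [hWdef, ← intervalIntegral.integral_mul_const]
      simp only [intervalIntegral.integral_of_le hTT,
        intervalIntegral.integral_of_le (zero_le_one (α := ℝ))]
      exact this.symm
    refine Tendsto.congr' hsw ?_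
    have hd := intervalIntegral.tendsto_integral_filter_of_dominated_convergence (μ := volume)
      (a := (0:ℝ)) (b := 1) (l := atTop)
      (F := fun T s => (muW ρ T)⁻¹ * ∫ t in (-T)..T, u (t + s) ^ 2 * ρ t) (f := fun _ => (0 : ℝ))
      (fun _ => M ^ 2) ?_ ?_ intervalIntegrable_const ?_
    · simpa using hd
    · filter_upwards [hev] with T hT
      have hTT : -T ≤ T := by linarith [hT.2]
      have := (hprod T).integral_prod_right.aestronglyMeasurable.const_mul (muW ρ T)⁻¹
      simpa only [intervalIntegral.integral_of_le hTT, uIoc_of_le hTT] using this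
    · filter_upwards [hev] with T hT
      have hTT : -T ≤ T := by linarith [hT.2]
      refine Eventually.of_forall fun s _ => ?_
      have hnn : 0 ≤ ∫ t in (-T)..T, u (t + s) ^ 2 * ρ t :=
        intervalIntegral.integral_nonneg hTT fun t _ => mul_nonneg (by positivity) (hpos t).le
      have hle : ∫ t in (-T)..T, u (t + s) ^ 2 * ρ t ≤ M ^ 2 * muW ρ T := by
        rw [muW, ← intervalIntegral.integral_const_mul]
        refine intervalIntegral.integral_mono hTT
          (hmul (v := fun t => u (t + s) ^ 2) (by fun_prop) _ _) ((hρi _ _).const_mul _) fun t => ?_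
        exact mul_le_mul_of_nonneg_right (pow_le_pow_left₀ (h0 _) (hM _) 2) (hpos t).le
      rw [Real.norm_of_nonneg (mul_nonneg (inv_nonneg.2 hT.1.le) hnn), inv_mul_le_iff₀ hT.1]
      linarith
    · refine Eventually.of_forall fun s _ => ?_
      have hz : Tendsto (fun T => M * ((muW ρ T)⁻¹ * ∫ t in (-T)..T, u (t + s) * ρ t))
          atTop (𝓝 0) := by simpa using (hlim s).const_mul M
      refine tendsto_of_tendsto_of_tendsto_of_le_of_le' tendsto_const_nhds hz ?_ ?_
      · filter_upwards [hev] with T hT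
        exact mul_nonneg (inv_nonneg.2 hT.1.le) (intervalIntegral.integral_nonneg
          (by linarith [hT.2]) fun t _ => mul_nonneg (by positivity) (hpos t).le)
      · filter_upwards [hev] with T hT
        have hTT : -T ≤ T := by linarith [hT.2]
        rw [mul_left_comm]
        refine mul_le_mul_of_nonneg_left ?_ (inv_nonneg.2 hT.1.le)
        rw [← intervalIntegral.integral_const_mul]
        refine intervalIntegral.integral_mono hTT
          (hmul (v := fun t => u (t + s) ^ 2) (by fun_prop) _ _)
          ((hmul (v := fun t => u (t + s)) (by fun_prop) _ _).const_mul _) fun t => ?_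
        have h1 := mul_nonneg (mul_nonneg (h0 (t + s)) (sub_nonneg.2 (hM (t + s)))) (hpos t).le
        simp only
        nlinarith
  rw [Metric.tendsto_atTop'] at hB ⊢
  intro ε hε
  obtain ⟨N, hN⟩ := hB (ε ^ 2 / 4) (by positivity)
  obtain ⟨N', hN'⟩ := eventually_atTop.1 hev
  refine ⟨max N N', fun T hT => ?_⟩
  have hT1 := hN T (lt_of_le_of_lt (le_max_left _ _) hT)
  have hT2 := hN' T ((le_max_right _ _).trans hT.le)
  have hTT : -T ≤ T := by linarith [hT2.2]
  have hnn : ∀ {v : ℝ → ℝ}, (∀ t, 0 ≤ v t) → 0 ≤ (muW ρ T)⁻¹ * ∫ t in (-T)..T, v t * ρ t :=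
    fun hv => mul_nonneg (inv_nonneg.2 hT2.1.le) (intervalIntegral.integral_nonneg hTT
      fun t _ => mul_nonneg (hv t) (hpos t).le)
  rw [Real.dist_eq, sub_zero, abs_of_nonneg (hnn hW0)] at hT1
  rw [Real.dist_eq, sub_zero, abs_of_nonneg (hnn fun t => Real.sqrt_nonneg _)]
  have hsq : ∀ t, Real.sqrt (W t) ≤ ε / 4 + W t / ε := fun t => by
    have h1 := Real.sq_sqrt (hW0 t)
    have h2 : ε / 4 + W t / ε - Real.sqrt (W t) = (Real.sqrt (W t) - ε / 2) ^ 2 / ε := by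
      rw [sub_sq, h1]; field_simp; ring
    have h3 : 0 ≤ (Real.sqrt (W t) - ε / 2) ^ 2 / ε := by positivity
    linarith
  have hI : ∫ t in (-T)..T, Real.sqrt (W t) * ρ t
      ≤ ε / 4 * muW ρ T + 1 / ε * ∫ t in (-T)..T, W t * ρ t := by
    rw [muW, ← intervalIntegral.integral_const_mul, ← intervalIntegral.integral_const_mul,
      ← intervalIntegral.integral_add ((hρi _ _).const_mul _) ((hmul hWc _ _).const_mul _)]
    refine intervalIntegral.integral_mono hTT
      (hmul (v := fun t => Real.sqrt (W t)) (by fun_prop) _ _)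
      (((hρi _ _).const_mul _).add ((hmul hWc _ _).const_mul _)) fun t => ?_
    have h1 := mul_le_mul_of_nonneg_right (hsq t) (hpos t).le
    calc _ ≤ _ := h1
      _ = _ := by ring
  calc (muW ρ T)⁻¹ * ∫ t in (-T)..T, Real.sqrt (W t) * ρ t
      ≤ (muW ρ T)⁻¹ * (ε / 4 * muW ρ T + 1 / ε * ∫ t in (-T)..T, W t * ρ t) :=
        mul_le_mul_of_nonneg_left hI (inv_nonneg.2 hT2.1.le)
    _ = ε / 4 + 1 / ε * ((muW ρ T)⁻¹ * ∫ t in (-T)..T, W t * ρ t) := by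
        have := hT2.1.ne'
        field_simp
    _ ≤ ε / 4 + 1 / ε * (ε ^ 2 / 4) := by gcongr
    _ = ε / 2 := by field_simp; ring
    _ < ε := by linarith

theorem wpaa_aux {ρ : ℝ → ℝ} (hρ : UInvSp E ρ) {f : ℝ → E} (hf : WPAA ρ f) : WPAAS2 ρ f := by
  obtain ⟨g, h, hg, hh, hfe⟩ := hf
  obtain ⟨M, hM0, hM⟩ := hg.bdd
  obtain ⟨N, hN0, hN⟩ := hh.2.1.bdd
  have hfc : Continuous f := by
    rw [funext hfe]
    exact hg.1.cont.add hh.1.cont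
  have hfb : ∀ t, ‖f t‖ ≤ M + N := fun t => by
    rw [hfe]
    exact (norm_add_le _ _).trans (add_le_add (hM t) (hN t))
  refine ⟨⟨l2loc_of_bdd hfc.stronglyMeasurable hfb, (M + N) ^ 2, fun t => ?_⟩, g, h, hg.as2, ?_, hfe⟩
  · have := intervalIntegral.integral_mono (μ := volume) (a := t) (b := t + 1)
      (f := fun s => ‖f s‖ ^ 2) (g := fun _ => (M + N) ^ 2) (by linarith)
      (Continuous.intervalIntegrable (by fun_prop) _ _) intervalIntegrable_const
      (fun s => pow_le_pow_left₀ (norm_nonneg _) (hfb s) 2)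
    simpa using this
  · exact key_aux (u := fun t => ‖h t‖) hρ.1 hh.1.cont.norm (fun t => norm_nonneg _) hN
      fun τ => (hρ.2 h hh τ).2.2

end Aux

variable {Ω : Type*} [MeasurableSpace Ω] {P : Measure Ω} [IsProbabilityMeasure P]
variable {H : Type*} [NormedAddCommGroup H] [InnerProductSpace ℝ H] [CompleteSpace H]
  [SecondCountableTopology H]

/-- Lemma 3.2. If `ρ ∈ 𝓤^inv` and `f ∈ WPAA(ρ)`, then
`f ∈ WPAAS²(ρ)`. -/
theorem WPAA_subset_WPAAS2
    (ρ : ℝ → ℝ) (hρ : UInvSp (Lp H 2 P) ρ)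
    (f : ℝ → Lp H 2 P) (hf : WPAA ρ f) :
    WPAAS2 ρ f := by
  exact wpaa_aux hρ hf
end
end

section
/- Suppose f : ℝ × L²(P,H) → L²(P,H) satisfies f(·,x) ∈ L²_loc(ℝ,L²(P,H)) for each x ∈ L²(P,H) and f is uniformly stochastically continuous on each bounded subset of L²(P,H) uniformly for t ∈ ℝ. If u : ℝ → L²(P,H) is measurable and K = closure of {u(t) : t ∈ ℝ} is compact in L²(P,H), then the process t ↦ f(t,u(t)) belongs to L²_loc(ℝ,L²(P,H)); in particular, for every compact set E ⊆ ℝ, ∫_E E‖f(s,u(s))‖² ds < ∞. -/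
open MeasureTheory Filter Set Topology

noncomputable section

variable {Ω : Type*} [MeasurableSpace Ω] {P : Measure Ω} [IsProbabilityMeasure P]
variable {H : Type*} [NormedAddCommGroup H] [InnerProductSpace ℝ H] [CompleteSpace H]
  [SecondCountableTopology H]

/-- first step of Lemma 3.6. If `f(·,x) ∈ L²_loc` for each `x`, `f` is
uniformly stochastically continuous on bounded sets uniformly in `t`, `u` is measurable
and the closure of the range of `u` is compact, then `t ↦ f(t,u(t)) ∈ L²_loc`. -/
theorem composition_L2loc
    (f : ℝ → Lp H 2 P → Lp H 2 P)
    (hfl : ∀ x : Lp H 2 P, L2loc fun t => f t x)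
    (hfc : UnifStochCont f)
    (u : ℝ → Lp H 2 P) (hu : MeasureTheory.StronglyMeasurable u)
    (hK : IsCompact (closure (Set.range u))) :
    L2loc fun t => f t (u t) := by
  intro S hS
  -- continuity in the second variable, for fixed time
  have hcont : ∀ t : ℝ, Continuous (f t) := by
    intro t
    rw [Metric.continuous_iff]
    intro b ε hε
    obtain ⟨δ, hδ, h⟩ := hfc (Metric.ball b 1) Metric.isBounded_ball (ε ^ 2) (by positivity)
    refine ⟨min 1 (Real.sqrt δ), lt_min one_pos (Real.sqrt_pos.2 hδ), fun a ha => ?_⟩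
    have h1 : dist a b < 1 := lt_of_lt_of_le ha (min_le_left _ _)
    have h2 : dist a b < Real.sqrt δ := lt_of_lt_of_le ha (min_le_right _ _)
    rw [dist_eq_norm] at h2 ⊢
    have h3 : ‖a - b‖ ^ 2 < δ := (Real.lt_sqrt (norm_nonneg _)).1 h2
    have h4 := h a (Metric.mem_ball.2 h1) b (Metric.mem_ball_self one_pos) h3 t
    exact lt_of_pow_lt_pow_left₀ 2 hε.le h4
  have hmeas : AEStronglyMeasurable (fun t => ‖f t (u t)‖ ^ 2) (volume.restrict S) := by
    refine aestronglyMeasurable_of_tendsto_ae atTop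
      (f := fun n t => ‖f t (hu.approx n t)‖ ^ 2) (fun n => ?_) ?_
    · have heq : (fun t => ‖f t (hu.approx n t)‖ ^ 2) = fun t => ∑ y ∈ (hu.approx n).range,
          ((hu.approx n) ⁻¹' {y}).indicator (fun t => ‖f t y‖ ^ 2) t := by
        funext t
        rw [Finset.sum_eq_single (hu.approx n t)]
        · simp
        · intro y _ hy
          exact Set.indicator_of_notMem (fun h => hy (by simpa using h.symm)) _
        · intro h
          exact absurd (SimpleFunc.mem_range_self _ t) h
      rw [heq]
      refine Finset.aestronglyMeasurable_fun_sum _ fun y _ => ?_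
      exact (hfl y S hS).aestronglyMeasurable.indicator ((hu.approx n).measurableSet_fiber y)
    · refine Eventually.of_forall fun t => ?_
      exact (((hcont t).tendsto (u t)).comp (hu.tendsto_approx t)).norm.pow 2
  obtain ⟨δ, hδ, hδf⟩ := hfc _ hK.isBounded 1 one_pos
  obtain ⟨T, hTK, hTfin, hT⟩ := hK.finite_cover_balls (Real.sqrt_pos.2 hδ)
  have hbd : Integrable (fun t => 2 * (∑ y ∈ hTfin.toFinset, ‖f t y‖ ^ 2) + 2)
      (volume.restrict S) := by
    haveI : IsFiniteMeasure (volume.restrict S) :=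
      ⟨by simpa using hS.measure_lt_top⟩
    exact ((integrable_finset_sum _ fun y _ => hfl y S hS).const_mul 2).add (integrable_const 2)
  refine Integrable.mono' hbd hmeas (Eventually.of_forall fun t => ?_)
  have hut : u t ∈ closure (Set.range u) := subset_closure ⟨t, rfl⟩
  obtain ⟨y, hy, hyt⟩ := Set.mem_iUnion₂.1 (hT hut)
  rw [Metric.mem_ball, dist_eq_norm] at hyt
  have h1 := hδf (u t) hut y (hTK hy) ((Real.lt_sqrt (norm_nonneg _)).1 hyt) t
  have h2 : ‖f t y‖ ^ 2 ≤ ∑ y ∈ hTfin.toFinset, ‖f t y‖ ^ 2 :=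
    Finset.single_le_sum (f := fun y => ‖f t y‖ ^ 2) (fun _ _ => by positivity)
      (hTfin.mem_toFinset.2 hy)
  have h3 : ‖f t (u t)‖ ≤ ‖f t (u t) - f t y‖ + ‖f t y‖ := by
    simpa using norm_add_le (f t (u t) - f t y) (f t y)
  rw [Real.norm_of_nonneg (by positivity)]
  have h4 : ‖f t (u t)‖ ^ 2 ≤ (‖f t (u t) - f t y‖ + ‖f t y‖) ^ 2 :=
    pow_le_pow_left₀ (norm_nonneg _) h3 2
  nlinarith [sq_nonneg (‖f t (u t) - f t y‖ - ‖f t y‖)]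
end
end

section
/- Let X be a Banach space, A : D(A) ⊆ X → X a closed linear operator, a ∈ L¹(ℝ₊) a scalar kernel not identically zero, and (S(t))_{t≥0} a family of bounded linear operators on X such that: t ↦ S(t)x is strongly measurable for each x ∈ X; ‖S(t)‖ ≤ φ(t) for a.e. t ≥ 0 with φ ∈ L¹(ℝ₊) nonincreasing; for every x ∈ D(A) and t ≥ 0, S(t)x ∈ D(A) with A S(t)x = S(t)A x; and S(t)x = a(t)x + ∫₀ᵗ a(t−s) A S(s)x ds for all x ∈ D(A) and a.e. t ≥ 0. Let f ∈ L¹(ℝ,X) with f(t) ∈ D(A) for all t ∈ ℝ and t ↦ A f(t) in L¹(ℝ,X). Then x(t) := ∫_{−∞}^{t} S(t−s) f(s) ds is well-defined, x(t) ∈ D(A) for each t ∈ ℝ, and x satisfies the Volterra equation x(t) = ∫_{−∞}^{t} a(t−s)[A x(s) + f(s)] ds for all t ∈ ℝ. -/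
open MeasureTheory Filter Set Topology

noncomputable section

variable {Ω : Type*} [MeasurableSpace Ω] {P : Measure Ω} [IsProbabilityMeasure P]
variable {H : Type*} [NormedAddCommGroup H] [InnerProductSpace ℝ H] [CompleteSpace H]
  [SecondCountableTopology H]

theorem aux_meas {α X : Type*} [MeasurableSpace α] {μ : Measure α}
    [NormedAddCommGroup X] [NormedSpace ℝ X]
    (T : α → X →L[ℝ] X) (hT : ∀ x, AEStronglyMeasurable (fun z => T z x) μ)
    (g : α → X) (hg : AEStronglyMeasurable g μ) :
    AEStronglyMeasurable (fun z => T z (g z)) μ := by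
  have hsimple : ∀ q : SimpleFunc α X, AEStronglyMeasurable (fun z => T z (q z)) μ := by
    intro q
    induction q using SimpleFunc.induction with
    | const c hs =>
      rename_i s
      have : (fun z => T z ((SimpleFunc.piecewise s hs (SimpleFunc.const _ c)
          (SimpleFunc.const _ 0)) z)) = s.indicator (fun z => T z c) := by
        funext z
        by_cases hz : z ∈ s <;> simp [hz]
      rw [this]
      exact (hT c).indicator hs
    | add hd h1 h2 =>
      simp only [SimpleFunc.coe_add, Pi.add_apply, map_add]
      exact h1.add h2
  obtain ⟨g', hg', hgg'⟩ := hg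
  have h1 : AEStronglyMeasurable (fun z => T z (g' z)) μ := by
    refine aestronglyMeasurable_of_tendsto_ae (u := atTop)
      (f := fun n z => T z (hg'.approx n z)) (fun n => hsimple _) ?_
    refine Eventually.of_forall fun z => ?_
    exact ((T z).continuous.tendsto _).comp (hg'.tendsto_approx z)
  refine h1.congr ?_
  filter_upwards [hgg'] with z hz
  rw [hz]

theorem aux_hille {α X : Type*} [MeasurableSpace α] {μ : Measure α}
    [NormedAddCommGroup X] [NormedSpace ℝ X] [CompleteSpace X]
    (D : Submodule ℝ X) (A : X → X)
    (hA_add : ∀ x ∈ D, ∀ y ∈ D, A (x + y) = A x + A y)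
    (hA_smul : ∀ (c : ℝ), ∀ x ∈ D, A (c • x) = c • A x)
    (hA_closed : ∀ (u : ℕ → X) (x y : X), (∀ n, u n ∈ D) →
      Tendsto u atTop (𝓝 x) → Tendsto (fun n => A (u n)) atTop (𝓝 y) →
      x ∈ D ∧ A x = y)
    (g h : α → X) (hg : Integrable g μ) (hh : Integrable h μ)
    (hgh : ∀ z, g z ∈ D ∧ A (g z) = h z) :
    (∫ z, g z ∂μ) ∈ D ∧ A (∫ z, g z ∂μ) = ∫ z, h z ∂μ := by
  have hA0 : A 0 = 0 := by
    simpa using hA_smul 0 0 D.zero_mem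
  let G : Submodule ℝ (X × X) :=
    { carrier := {p | p.1 ∈ D ∧ A p.1 = p.2}
      zero_mem' := ⟨D.zero_mem, hA0⟩
      add_mem' := by
        rintro p q ⟨hp, hp'⟩ ⟨hq, hq'⟩
        exact ⟨D.add_mem hp hq, by simp [hA_add _ hp _ hq, hp', hq']⟩
      smul_mem' := by
        rintro c p ⟨hp, hp'⟩
        exact ⟨D.smul_mem c hp, by simp [hA_smul c _ hp, hp']⟩ }
  have hGc : IsClosed (G : Set (X × X)) := by
    rw [← isSeqClosed_iff_isClosed]
    intro u p hu hp
    refine hA_closed (fun n => (u n).1) p.1 p.2 (fun n => (hu n).1)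
      ((continuous_fst.tendsto p).comp hp) ?_
    have h2 : (fun n => A (u n).1) = fun n => (u n).2 := funext fun n => (hu n).2
    rw [h2]
    exact (continuous_snd.tendsto p).comp hp
  have : IsClosed (G : Set (X × X)) := hGc
  let Q : (X × X) →L[ℝ] ((X × X) ⧸ G) := G.mkQL
  have hint : Integrable (fun z => (g z, h z)) μ := hg.prodMk hh
  have hQ : Q (∫ z, (g z, h z) ∂μ) = 0 := by
    rw [← Q.integral_comp_comm hint]
    refine integral_eq_zero_of_ae (Eventually.of_forall fun z => ?_)
    exact (Submodule.Quotient.mk_eq_zero G).2 (hgh z)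
  have hmem : (∫ z, (g z, h z) ∂μ) ∈ G := (Submodule.Quotient.mk_eq_zero G).1 hQ
  rw [integral_pair hg hh] at hmem
  exact hmem

theorem aux_core
    {X : Type*} [NormedAddCommGroup X] [NormedSpace ℝ X] [CompleteSpace X]
    (D : Submodule ℝ X) (A : X → X)
    (hA_add : ∀ x ∈ D, ∀ y ∈ D, A (x + y) = A x + A y)
    (hA_smul : ∀ (c : ℝ), ∀ x ∈ D, A (c • x) = c • A x)
    (hA_closed : ∀ (u : ℕ → X) (x y : X), (∀ n, u n ∈ D) →
      Tendsto u atTop (𝓝 x) → Tendsto (fun n => A (u n)) atTop (𝓝 y) →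
      x ∈ D ∧ A x = y)
    (b : ℝ → ℝ) (hb : Integrable b)
    (T : ℝ → X →L[ℝ] X) (hTmeas : ∀ x : X, AEStronglyMeasurable (fun t => T t x) volume)
    (M : ℝ) (hTM : ∀ t, ‖T t‖ ≤ M)
    (hcomm : ∀ x ∈ D, ∀ t, T t x ∈ D ∧ A (T t x) = T t (A x))
    (hres : ∀ x ∈ D, ∀ᵐ t, T t x = b t • x + ∫ s, b (t - s) • T s (A x))
    (f : ℝ → X) (hf : Integrable f) (hfD : ∀ t, f t ∈ D)
    (hAf : Integrable fun t => A (f t)) :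
    (∀ t : ℝ, Integrable (fun s => T (t - s) (f s))) ∧
    (∀ t : ℝ, (∫ s, T (t - s) (f s)) ∈ D) ∧
    (∀ t : ℝ, (∫ s, T (t - s) (f s)) =
      ∫ s, b (t - s) • (A (∫ u, T (s - u) (f u)) + f s)) := by
  have hM0 : 0 ≤ M := (norm_nonneg _).trans (hTM 0)
  have hqmp : ∀ t : ℝ, Measure.QuasiMeasurePreserving (fun s : ℝ => t - s) volume volume :=
    fun t => quasiMeasurePreserving_sub_left volume t
  -- integrability of the convolution integrand
  have hint : ∀ (g : ℝ → X), Integrable g → ∀ t, Integrable (fun s => T (t - s) (g s)) := by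
    intro g hg t
    refine Integrable.mono' (hg.norm.const_mul M) ?_ ?_
    · exact aux_meas (fun s => T (t - s))
        (fun x => (hTmeas x).comp_quasiMeasurePreserving (hqmp t)) g hg.aestronglyMeasurable
    · exact Eventually.of_forall fun s => (T (t - s)).le_of_opNorm_le (hTM _) _
  have hH : ∀ t, (∫ s, T (t - s) (f s)) ∈ D ∧
      A (∫ s, T (t - s) (f s)) = ∫ s, T (t - s) (A (f s)) := fun t =>
    aux_hille D A hA_add hA_smul hA_closed _ _ (hint f hf t) (hint _ hAf t)
      (fun s => hcomm _ (hfD s) _)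
  refine ⟨hint f hf, fun t => (hH t).1, fun t => ?_⟩
  -- continuity of the convolution operator
  have hcint : ∀ τ y, Integrable (fun r => b (τ - r) • T r y) := by
    intro τ y
    refine Integrable.mono' (g := fun r => ‖b (τ - r)‖ * (M * ‖y‖))
      ((hb.comp_sub_left τ).norm.mul_const _) ?_ ?_
    · exact (hb.comp_sub_left τ).aestronglyMeasurable.smul (hTmeas y)
    · refine Eventually.of_forall fun r => ?_
      rw [norm_smul]
      exact mul_le_mul_of_nonneg_left ((T r).le_of_opNorm_le (hTM _) _) (norm_nonneg _)
  have hcont : ∀ τ, Continuous (fun y : X => ∫ r, b (τ - r) • T r y) := by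
    intro τ
    have hK0 : 0 ≤ (∫ r, ‖b (τ - r)‖) * M :=
      mul_nonneg (integral_nonneg fun _ => norm_nonneg _) hM0
    refine (LipschitzWith.of_dist_le_mul (K := ⟨(∫ r, ‖b (τ - r)‖) * M, hK0⟩) ?_).continuous
    intro y z
    rw [dist_eq_norm, dist_eq_norm, ← integral_sub (hcint τ y) (hcint τ z)]
    have : ((∫ r, ‖b (τ - r)‖) * M) * ‖y - z‖ = ∫ r, ‖b (τ - r)‖ * (M * ‖y - z‖) := by
      rw [integral_mul_const, mul_assoc]
    change _ ≤ ((∫ r, ‖b (τ - r)‖) * M) * ‖y - z‖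
    rw [this]
    refine norm_integral_le_of_norm_le ((hb.comp_sub_left τ).norm.mul_const _) ?_
    refine Eventually.of_forall fun r => ?_
    rw [← smul_sub, ← map_sub, norm_smul]
    exact mul_le_mul_of_nonneg_left ((T r).le_of_opNorm_le (hTM _) _) (norm_nonneg _)
  -- resolvent identity along f
  have hkey : ∀ᵐ s, T (t - s) (f s) = b (t - s) • f s + ∫ r, b (t - s - r) • T r (A (f s)) := by
    have hpm : AEStronglyMeasurable (fun s => (f s, A (f s))) volume :=
      hf.aestronglyMeasurable.prodMk hAf.aestronglyMeasurable
    obtain ⟨K, hKsep, hK⟩ := hpm.isSeparable_ae_range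
    have hK'sep : TopologicalSpace.IsSeparable (K ∩ {p : X × X | p.1 ∈ D ∧ A p.1 = p.2}) :=
      hKsep.mono inter_subset_left
    obtain ⟨c, hcK, hcc, hcd⟩ := hK'sep.exists_countable_dense_subset
    have h1 : ∀ᵐ τ, ∀ p ∈ c, T τ p.1 = b τ • p.1 + ∫ r, b (τ - r) • T r p.2 := by
      rw [ae_ball_iff hcc]
      intro p hp
      have := hres p.1 (hcK hp).2.1
      rwa [(hcK hp).2.2] at this
    have h2 : ∀ᵐ s, ∀ p ∈ c, T (t - s) p.1
        = b (t - s) • p.1 + ∫ r, b (t - s - r) • T r p.2 := (hqmp t).ae h1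
    filter_upwards [h2, hK] with s hs hsK
    have hcl : IsClosed {p : X × X | T (t - s) p.1
        = b (t - s) • p.1 + ∫ r, b (t - s - r) • T r p.2} :=
      isClosed_eq ((T (t - s)).continuous.comp continuous_fst)
        ((continuous_fst.const_smul _).add ((hcont (t - s)).comp continuous_snd))
    have hsub := closure_minimal (s := c) hs hcl
    exact hsub (hcd ⟨hsK, hfD s, rfl⟩)
  -- Fubini
  have hF : Integrable (Function.uncurry fun u s => b (t - u) • T (u - s) (A (f s)))
      ((volume : Measure ℝ).prod (volume : Measure ℝ)) := by
    refine Integrable.mono' (g := fun z : ℝ × ℝ => ‖b (t - z.1)‖ * (M * ‖A (f z.2)‖)) ?_ ?_ ?_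
    · exact (hb.comp_sub_left t).norm.mul_prod (hAf.norm.const_mul M)
    · have e1 : AEStronglyMeasurable (fun z : ℝ × ℝ => b (t - z.1))
          ((volume : Measure ℝ).prod (volume : Measure ℝ)) :=
        (hb.comp_sub_left t).aestronglyMeasurable.comp_quasiMeasurePreserving
          Measure.quasiMeasurePreserving_fst
      have e2 : AEStronglyMeasurable (fun z : ℝ × ℝ => T (z.1 - z.2) (A (f z.2)))
          ((volume : Measure ℝ).prod (volume : Measure ℝ)) :=
        aux_meas (fun z : ℝ × ℝ => T (z.1 - z.2))
          (fun x => (hTmeas x).comp_quasiMeasurePreserving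
            (quasiMeasurePreserving_sub volume volume))
          (fun z => A (f z.2))
          (hAf.aestronglyMeasurable.comp_quasiMeasurePreserving
            Measure.quasiMeasurePreserving_snd)
      exact e1.smul e2
    · refine Eventually.of_forall fun z => ?_
      simp only [Function.uncurry]
      rw [norm_smul]
      exact mul_le_mul_of_nonneg_left ((T _).le_of_opNorm_le (hTM _) _) (norm_nonneg _)
  have hshift : ∀ s y, ∫ r, b (t - s - r) • T r y = ∫ u, b (t - u) • T (u - s) y := by
    intro s y
    rw [← integral_sub_right_eq_self (fun r => b (t - s - r) • T r y) s]
    congr 1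
    funext u
    congr 2
    ring
  have hI2 : Integrable (fun s => ∫ u, b (t - u) • T (u - s) (A (f s))) :=
    hF.integral_prod_right
  have hI2' : Integrable (fun u => ∫ s, b (t - u) • T (u - s) (A (f s))) :=
    hF.integral_prod_left
  have hI1 : Integrable (fun s => b (t - s) • f s) := by
    refine ((hint f hf t).sub hI2).congr ?_
    filter_upwards [hkey] with s hs
    simp only [Pi.sub_apply]
    rw [hs, hshift]
    abel
  have hA' : ∀ u, b (t - u) • A (∫ s, T (u - s) (f s))
      = ∫ s, b (t - u) • T (u - s) (A (f s)) := by
    intro u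
    rw [(hH u).2, integral_smul]
  calc ∫ s, T (t - s) (f s)
      = ∫ s, (b (t - s) • f s + ∫ u, b (t - u) • T (u - s) (A (f s))) := by
        refine integral_congr_ae ?_
        filter_upwards [hkey] with s hs
        rw [hs, hshift]
    _ = (∫ s, b (t - s) • f s) + ∫ s, ∫ u, b (t - u) • T (u - s) (A (f s)) :=
        integral_add hI1 hI2
    _ = (∫ s, b (t - s) • f s) + ∫ u, ∫ s, b (t - u) • T (u - s) (A (f s)) := by
        rw [integral_integral_swap hF]
    _ = (∫ u, ∫ s, b (t - u) • T (u - s) (A (f s))) + ∫ s, b (t - s) • f s := add_comm _ _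
    _ = ∫ u, ((∫ s, b (t - u) • T (u - s) (A (f s))) + b (t - u) • f u) :=
        (integral_add hI2' hI1).symm
    _ = _ := by
        congr 1
        funext u
        rw [smul_add, hA']

/-- deterministic part of Proposition 4.2. Let `X` be a Banach space,
`A` a closed linear operator with domain `D ⊆ X`, `a ∈ L¹(ℝ₊)` a scalar kernel not a.e.
zero, and `(S(t))_{t≥0}` an integral resolvent with generator `A` and kernel `a`:
`t ↦ S(t)x` is strongly measurable, `‖S(t)‖ ≤ φ(t)` a.e. with `φ ∈ L¹(ℝ₊)` nonincreasing,
`S(t)` commutes with `A` on `D`, and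
`S(t)x = a(t)x + ∫₀ᵗ a(t−s) A S(s)x ds` for `x ∈ D` and a.e. `t ≥ 0`. If `f ∈ L¹(ℝ,X)`
takes values in `D` with `A∘f ∈ L¹(ℝ,X)`, then `x(t) = ∫_{−∞}^t S(t−s) f(s) ds` is well
defined, takes values in `D`, and solves the Volterra equation
`x(t) = ∫_{−∞}^t a(t−s)[A x(s) + f(s)] ds`. -/
theorem integral_resolvent_solves_volterra
    {X : Type*} [NormedAddCommGroup X] [NormedSpace ℝ X] [CompleteSpace X]
    (D : Submodule ℝ X) (A : X → X)
    (hA_add : ∀ x ∈ D, ∀ y ∈ D, A (x + y) = A x + A y)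
    (hA_smul : ∀ (c : ℝ), ∀ x ∈ D, A (c • x) = c • A x)
    (hA_closed : ∀ (u : ℕ → X) (x y : X), (∀ n, u n ∈ D) →
      Tendsto u atTop (𝓝 x) → Tendsto (fun n => A (u n)) atTop (𝓝 y) →
      x ∈ D ∧ A x = y)
    (a : ℝ → ℝ) (ha : IntegrableOn a (Ici 0))
    (ha0 : ¬ (∀ᵐ t ∂(volume.restrict (Ici (0:ℝ))), a t = 0))
    (S : ℝ → X →L[ℝ] X)
    (hSmeas : ∀ x : X, AEStronglyMeasurable (fun t => S t x) (volume.restrict (Ici 0)))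
    (φ : ℝ → ℝ) (hφ0 : ∀ t ∈ Ici (0:ℝ), 0 ≤ φ t) (hφmono : AntitoneOn φ (Ici 0))
    (hφint : IntegrableOn φ (Ici 0))
    (hSbound : ∀ᵐ t ∂(volume.restrict (Ici (0:ℝ))), ‖S t‖ ≤ φ t)
    (hcomm : ∀ x ∈ D, ∀ t ≥ (0:ℝ), S t x ∈ D ∧ A (S t x) = S t (A x))
    (hres : ∀ x ∈ D, ∀ᵐ t ∂(volume.restrict (Ici (0:ℝ))),
      S t x = a t • x + ∫ s in (0:ℝ)..t, a (t - s) • A (S s x))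
    (f : ℝ → X) (hf : Integrable f) (hfD : ∀ t, f t ∈ D)
    (hAf : Integrable fun t => A (f t)) :
    (∀ t : ℝ, IntegrableOn (fun s => S (t - s) (f s)) (Iic t)) ∧
    (∀ t : ℝ, (∫ s in Iic t, S (t - s) (f s)) ∈ D) ∧
    (∀ t : ℝ, (∫ s in Iic t, S (t - s) (f s)) =
      ∫ s in Iic t, a (t - s) • (A (∫ u in Iic s, S (s - u) (f u)) + f s)) := by
  classical
  have hA0 : A 0 = 0 := by
    simpa using hA_smul 0 0 D.zero_mem
  have hφ00 : 0 ≤ φ 0 := hφ0 0 (mem_Ici.2 le_rfl)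
  let b : ℝ → ℝ := (Ici (0:ℝ)).indicator a
  let T : ℝ → X →L[ℝ] X := fun t => if 0 ≤ t ∧ ‖S t‖ ≤ φ 0 then S t else 0
  have hb : Integrable b := (integrable_indicator_iff measurableSet_Ici).2 ha
  have hTneg : ∀ t, t < 0 → T t = 0 := fun t ht => if_neg fun h => absurd h.1 (not_le.2 ht)
  have hTS : ∀ᵐ t, 0 ≤ t → T t = S t := by
    have := (ae_restrict_iff' measurableSet_Ici).1 hSbound
    filter_upwards [this] with t ht h0
    exact if_pos ⟨h0, (ht h0).trans (hφmono (mem_Ici.2 le_rfl) h0 h0)⟩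
  have hTmeas : ∀ x : X, AEStronglyMeasurable (fun t => T t x) volume := by
    intro x
    have h1 := (aestronglyMeasurable_indicator_iff (measurableSet_Ici (a := (0:ℝ)))).2 (hSmeas x)
    refine h1.congr ?_
    filter_upwards [hTS] with t ht
    by_cases h0 : 0 ≤ t
    · rw [indicator_of_mem (mem_Ici.2 h0), ht h0]
    · rw [indicator_of_notMem (by simpa using h0), hTneg t (not_le.1 h0)]
      rfl
  have hTM : ∀ t, ‖T t‖ ≤ φ 0 := by
    intro t
    by_cases h : 0 ≤ t ∧ ‖S t‖ ≤ φ 0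
    · have : T t = S t := if_pos h
      rw [this]; exact h.2
    · have : T t = 0 := if_neg h
      rw [this]; simpa using hφ00
  have hcomm' : ∀ x ∈ D, ∀ t, T t x ∈ D ∧ A (T t x) = T t (A x) := by
    intro x hx t
    by_cases h : 0 ≤ t ∧ ‖S t‖ ≤ φ 0
    · have : T t = S t := if_pos h
      rw [this]; exact hcomm x hx t h.1
    · have : T t = 0 := if_neg h
      rw [this]
      exact ⟨D.zero_mem, hA0⟩
  have hres' : ∀ x ∈ D, ∀ᵐ t, T t x = b t • x + ∫ s, b (t - s) • T s (A x) := by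
    intro x hx
    have h1 := (ae_restrict_iff' measurableSet_Ici).1 (hres x hx)
    filter_upwards [h1, hTS] with t ht htS
    by_cases h0 : 0 ≤ t
    · have hbt : b t = a t := indicator_of_mem (mem_Ici.2 h0) a
      rw [htS h0, ht h0, hbt, intervalIntegral.integral_of_le h0,
        ← integral_indicator measurableSet_Ioc]
      congr 1
      refine integral_congr_ae ?_
      have hne : ∀ᵐ r : ℝ, r ≠ 0 := Measure.ae_ne volume 0
      filter_upwards [hTS, hne] with r hr hr0
      by_cases hm : r ∈ Ioc 0 t
      · have hb' : b (t - r) = a (t - r) :=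
          indicator_of_mem (mem_Ici.2 (sub_nonneg.2 hm.2)) a
        rw [indicator_of_mem hm, hb', hr hm.1.le, (hcomm x hx r hm.1.le).2]
      · rw [indicator_of_notMem hm]
        rcases lt_or_gt_of_ne hr0 with hlt | hgt
        · rw [hTneg r hlt]; simp
        · have : t < r := by
            by_contra hc
            exact hm ⟨hgt, not_lt.1 hc⟩
          have hb' : b (t - r) = 0 := indicator_of_notMem (by simpa using this) a
          rw [hb']; simp
    · have h0' := not_le.1 h0
      have hbt : b t = 0 := indicator_of_notMem (by simpa using h0') a
      have hz : ∀ s, b (t - s) • T s (A x) = 0 := by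
        intro s
        by_cases hs : s < 0
        · rw [hTneg s hs]; simp
        · have hb' : b (t - s) = 0 :=
            indicator_of_notMem (by simp only [mem_Ici, not_le]; linarith) a
          rw [hb']; simp
      rw [hTneg t h0', hbt]
      simp [hz]
  have hconv : ∀ t, (Iic t).indicator (fun s => S (t - s) (f s))
      =ᵐ[volume] fun s => T (t - s) (f s) := by
    intro t
    have := (quasiMeasurePreserving_sub_left (volume : Measure ℝ) t).ae hTS
    filter_upwards [this] with s hs
    by_cases h : s ≤ t
    · rw [indicator_of_mem (mem_Iic.2 h), hs (sub_nonneg.2 h)]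
    · rw [indicator_of_notMem (by simpa using h), hTneg _ (by linarith [not_le.1 h])]
      rfl
  have hx : ∀ t, (∫ s in Iic t, S (t - s) (f s)) = ∫ s, T (t - s) (f s) := by
    intro t
    rw [← integral_indicator measurableSet_Iic]
    exact integral_congr_ae (hconv t)
  obtain ⟨c1, c2, c3⟩ := aux_core D A hA_add hA_smul hA_closed b hb T hTmeas (φ 0) hTM
    hcomm' hres' f hf hfD hAf
  refine ⟨fun t => ?_, fun t => ?_, fun t => ?_⟩
  · exact (integrable_indicator_iff measurableSet_Iic).1 ((c1 t).congr (hconv t).symm)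
  · rw [hx]; exact c2 t
  · simp only [hx]
    rw [c3 t, ← integral_indicator measurableSet_Iic]
    congr 1
    funext s
    by_cases h : s ≤ t
    · have hb' : b (t - s) = a (t - s) := indicator_of_mem (mem_Ici.2 (sub_nonneg.2 h)) a
      rw [indicator_of_mem (mem_Iic.2 h), hb']
    · have hb' : b (t - s) = 0 :=
        indicator_of_notMem (by simp only [mem_Ici, not_le]; linarith [not_le.1 h]) a
      rw [indicator_of_notMem (by simpa using h), hb', zero_smul]
end
end

section
/- If x : ℝ → L²(P,H) is square-mean almost automorphic, then its range {x(t) : t ∈ ℝ} is relatively compact in L²(P,H), i.e., the closure of {x(t) : t ∈ ℝ} is compact. -/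
open MeasureTheory Filter Set Topology

noncomputable section

variable {Ω : Type*} [MeasurableSpace Ω] {P : Measure Ω} [IsProbabilityMeasure P]
variable {H : Type*} [NormedAddCommGroup H] [InnerProductSpace ℝ H] [CompleteSpace H]
  [SecondCountableTopology H]

/-- The range of a square-mean almost automorphic process is relatively
compact in `L²(P,H)`. -/
theorem SAA_range_relatively_compact
    (x : ℝ → Lp H 2 P) (hx : SAA x) :
    IsCompact (closure (Set.range x)) := by
  apply IsSeqCompact.isCompact
  intro u hu
  have h1 : ∀ n : ℕ, ∃ t : ℝ, dist (u n) (x t) < 1 / ((n : ℝ) + 1) := by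
    intro n
    obtain ⟨_, ⟨t, rfl⟩, ht⟩ := Metric.mem_closure_iff.1 (hu n) (1 / ((n : ℝ) + 1)) (by positivity)
    exact ⟨t, ht⟩
  choose s hs using h1
  obtain ⟨φ, hφ, y, hy, -⟩ := hx.2 s
  have h2 : Tendsto (fun n => x (s (φ n))) atTop (𝓝 (y 0)) := by
    rw [tendsto_iff_norm_sub_tendsto_zero]
    have h3 := (hy 0).sqrt
    simpa [Real.sqrt_sq] using h3
  have h4 : Tendsto (fun n => dist (x (s (φ n))) (u (φ n))) atTop (𝓝 0) := by
    have h5 : Tendsto (fun n => dist (x (s n)) (u n)) atTop (𝓝 0) :=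
      squeeze_zero (fun _ => dist_nonneg) (fun n => by rw [dist_comm]; exact (hs n).le)
        tendsto_one_div_add_atTop_nhds_zero_nat
    exact h5.comp hφ.tendsto_atTop
  have h6 : Tendsto (u ∘ φ) atTop (𝓝 (y 0)) := h2.congr_dist h4
  exact ⟨y 0, isClosed_closure.mem_of_tendsto h6 (Eventually.of_forall fun n => hu (φ n)),
    φ, hφ, h6⟩
end
end
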